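/- Let n ≥ 2, let Y = Y_c be a real symmetric n×n weighted graph Laplacian (nonpositive off-diagonal entries, zero row sums) of rank n−1, L a real symmetric n×n matrix with L·1ₙ = 0, and D, R, Υ, Φ, Ψ real diagonal matrices with strictly positive diagonals on D, R, Υ, Ψ and nonnegative diagonal on Φ. Suppose the closed-loop matrix A_c is semistable and rank(A_c) = 2n − 1. Then for every initial state (Iᵐ(0), Uᵈ(0)) ∈ ℝ^{2n}, lim_{t→∞} exp(t·A_c)·(Iᵐ(0), Uᵈ(0)) = (0, r_{c2}·1ₙ), where r_{c2} = [1ₙᵀΨ⁻¹(Uᵈ(0) + ΦLΥ⁻¹Iᵐ(0))] / [1ₙᵀΨ⁻¹1ₙ]. In particular all steady currents are zero and all nodes attain the same rated voltage r_{c2}. -/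

import Mathlib

open Matrix Filter Topology

/-- A real square matrix `A` is semistable if `exp(tA)x₀` converges as `t → ∞` for every
initial vector `x₀`. -/
def IsSemistable {N : Type*} [Fintype N] [DecidableEq N]
    (A : Matrix N N ℝ) : Prop :=
  ∀ x₀ : N → ℝ, ∃ y : N → ℝ,
    Tendsto (fun t : ℝ => NormedSpace.exp (t • A) *ᵥ x₀) atTop (𝓝 y)


section helpers

attribute [local instance] Matrix.linftyOpNormedRing Matrix.linftyOpNormedAlgebra

lemma hasDerivAt_exp_smul_mat {N : Type*} [Fintype N] [DecidableEq N]
    (A : Matrix N N ℝ) (t : ℝ) :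
    HasDerivAt (fun t : ℝ => NormedSpace.exp (t • A)) (A * NormedSpace.exp (t • A)) t :=
  hasDerivAt_exp_smul_const' (𝕂 := ℝ) A t

lemma hasDerivAt_exp_smul_mulVec {N : Type*} [Fintype N] [DecidableEq N]
    (A : Matrix N N ℝ) (x : N → ℝ) (t : ℝ) :
    HasDerivAt (fun t : ℝ => NormedSpace.exp (t • A) *ᵥ x)
      (A *ᵥ (NormedSpace.exp (t • A) *ᵥ x)) t := by
  have h := hasDerivAt_exp_smul_mat A t
  let f : Matrix N N ℝ →ₗ[ℝ] (N → ℝ) :=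
    { toFun := fun M => M *ᵥ x
      map_add' := fun M M' => Matrix.add_mulVec M M' x
      map_smul' := fun c M => Matrix.smul_mulVec c M x }
  have h2 := (LinearMap.toContinuousLinearMap f).hasFDerivAt.comp_hasDerivAt t h
  rw [Matrix.mulVec_mulVec]
  exact h2

end helpers

lemma dot_exp_const {N : Type*} [Fintype N] [DecidableEq N]
    (A : Matrix N N ℝ) (w x : N → ℝ) (hw : w ᵥ* A = 0) (t : ℝ) :
    w ⬝ᵥ (NormedSpace.exp (t • A) *ᵥ x) = w ⬝ᵥ x := by
  have key : ∀ t : ℝ, HasDerivAt (fun t : ℝ => w ⬝ᵥ (NormedSpace.exp (t • A) *ᵥ x)) 0 t := by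
    intro t
    have h := hasDerivAt_pi.1 (hasDerivAt_exp_smul_mulVec A x t)
    have h2 := HasDerivAt.fun_sum (u := Finset.univ) (fun i _ => (h i).const_mul (w i))
    have h3 : ∑ i, w i * (A *ᵥ (NormedSpace.exp (t • A) *ᵥ x)) i = 0 := by
      change w ⬝ᵥ (A *ᵥ (NormedSpace.exp (t • A) *ᵥ x)) = 0
      rw [Matrix.dotProduct_mulVec, hw, zero_dotProduct]
    rw [h3] at h2
    exact h2
  have := is_const_of_deriv_eq_zero (fun t => (key t).differentiableAt)
    (fun t => (key t).deriv) t 0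
  simpa using this

lemma limit_in_ker {N : Type*} [Fintype N] [DecidableEq N]
    (A : Matrix N N ℝ) (x y : N → ℝ)
    (h : Tendsto (fun t : ℝ => NormedSpace.exp (t • A) *ᵥ x) atTop (𝓝 y)) :
    A *ᵥ y = 0 := by
  have hfix : ∀ s : ℝ, NormedSpace.exp (s • A) *ᵥ y = y := by
    intro s
    have h1 : Tendsto (fun t : ℝ => NormedSpace.exp ((s + t) • A) *ᵥ x) atTop (𝓝 y) :=
      h.comp (tendsto_atTop_add_const_left atTop s tendsto_id)
    have hc : Continuous (fun v : N → ℝ => NormedSpace.exp (s • A) *ᵥ v) :=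
      continuous_const.matrix_mulVec continuous_id
    have h2 := (hc.tendsto y).comp h
    refine tendsto_nhds_unique h2 (h1.congr fun t => ?_)
    have hcomm : Commute (s • A) (t • A) :=
      ((Commute.refl A).smul_left s).smul_right t
    simp only [Function.comp]
    rw [add_smul, Matrix.exp_add_of_commute _ _ hcomm, Matrix.mulVec_mulVec]
  have hd := hasDerivAt_exp_smul_mulVec A y 0
  rw [hfix 0] at hd
  simp only [hfix] at hd
  exact hd.unique (hasDerivAt_const 0 y)

/-- With no shunt conductances (`Y = Y_c` a connected Laplacian), the
semistable closed-loop matrix `A_c` with `rank(A_c) = 2n − 1` drives every trajectory to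
`(0, r_{c2}·1ₙ)`, where `r_{c2} = 1ₙᵀΨ⁻¹(Uᵈ(0) + ΦLΥ⁻¹Iᵐ(0)) / 1ₙᵀΨ⁻¹1ₙ`: all steady
currents vanish and all nodes attain the same rated voltage `r_{c2}`. -/
theorem closedLoop_steady_state_no_shunt
    (n : ℕ) (hn : 2 ≤ n)
    (Yc : Matrix (Fin n) (Fin n) ℝ)
    (hYcsym : Yc.IsSymm)
    (hYcoff : ∀ i j, i ≠ j → Yc i j ≤ 0)
    (hYcrow : ∀ i, ∑ j, Yc i j = 0)
    (hYcrank : Yc.rank = n - 1)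
    (Y : Matrix (Fin n) (Fin n) ℝ) (hY : Y = Yc)
    (L : Matrix (Fin n) (Fin n) ℝ) (hLsym : L.IsSymm)
    (hL1 : L *ᵥ (fun _ => (1 : ℝ)) = 0)
    (d r υ φv ψv : Fin n → ℝ)
    (hd : ∀ i, 0 < d i) (hr : ∀ i, 0 < r i) (hυ : ∀ i, 0 < υ i) (hψ : ∀ i, 0 < ψv i)
    (hφ : ∀ i, 0 ≤ φv i)
    (D R Υ Φ Ψ : Matrix (Fin n) (Fin n) ℝ)
    (hD : D = Matrix.diagonal d) (hR : R = Matrix.diagonal r)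
    (hΥ : Υ = Matrix.diagonal υ) (hΦ : Φ = Matrix.diagonal φv)
    (hΨ : Ψ = Matrix.diagonal ψv)
    (A_c : Matrix (Fin n ⊕ Fin n) (Fin n ⊕ Fin n) ℝ)
    (hA : A_c = Matrix.fromBlocks
      (-(D⁻¹ * (1 + Y * R))) (D⁻¹ * Y)
      (-(Ψ * L * Υ⁻¹) + Φ * L * Υ⁻¹ * D⁻¹ * (1 + Y * R)) (-(Φ * L * Υ⁻¹ * D⁻¹ * Y)))
    (hsemi : IsSemistable A_c)
    (hrank : A_c.rank = 2 * n - 1) :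
    ∀ z₀ : Fin n ⊕ Fin n → ℝ,
      Tendsto (fun t : ℝ => NormedSpace.exp (t • A_c) *ᵥ z₀) atTop
        (𝓝 (Sum.elim (0 : Fin n → ℝ)
          (fun _ => ((fun _ => (1 : ℝ)) ⬝ᵥ
              (Ψ⁻¹ *ᵥ ((fun i => z₀ (Sum.inr i)) +
                (Φ * L * Υ⁻¹) *ᵥ (fun i => z₀ (Sum.inl i))))) /
            ((fun _ => (1 : ℝ)) ⬝ᵥ (Ψ⁻¹ *ᵥ (fun _ => (1 : ℝ))))))) := by
  intro z₀
  obtain ⟨y, hy⟩ := hsemi z₀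
  have hAy := limit_in_ker A_c z₀ y hy
  let o : Fin n → ℝ := fun _ => 1
  let v : Fin n ⊕ Fin n → ℝ := Sum.elim 0 o
  have hYo : Y *ᵥ o = 0 := by
    ext i
    simp [Matrix.mulVec, dotProduct, o, hY, hYcrow i]
  have hAv : A_c *ᵥ v = 0 := by
    rw [hA, Matrix.fromBlocks_mulVec]
    have e1 : v ∘ Sum.inl = 0 := rfl
    have e2 : v ∘ Sum.inr = o := rfl
    rw [e1, e2, Matrix.neg_mulVec o (Φ * L * Υ⁻¹ * D⁻¹ * Y), ← Matrix.mulVec_mulVec,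
      ← Matrix.mulVec_mulVec, hYo]
    ext i
    cases i <;> simp
  have hv : v ≠ 0 := by
    intro h
    have := congrFun h (Sum.inr ⟨0, by omega⟩)
    simp [v, o] at this
  have hker : Module.finrank ℝ (LinearMap.ker A_c.mulVecLin) = 1 := by
    have h1 := LinearMap.finrank_range_add_finrank_ker A_c.mulVecLin
    have h2 : Module.finrank ℝ (LinearMap.range A_c.mulVecLin) = 2 * n - 1 := hrank
    rw [h2] at h1
    simp at h1
    omega
  obtain ⟨c, hc⟩ : ∃ c : ℝ, c • v = y := by
    have hv' : (⟨v, by simpa using hAv⟩ : LinearMap.ker A_c.mulVecLin) ≠ 0 := by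
      intro h
      exact hv (congrArg Subtype.val h)
    obtain ⟨c, hc⟩ := (finrank_eq_one_iff_of_nonzero' _ hv').1 hker ⟨y, by simpa using hAy⟩
    exact ⟨c, congrArg Subtype.val hc⟩
  have hΨu : Ψ⁻¹ * Ψ = 1 := by
    apply Matrix.nonsing_inv_mul
    rw [hΨ, Matrix.det_diagonal]
    exact (Finset.prod_ne_zero_iff.2 fun i _ => (hψ i).ne').isUnit
  have hoL : o ᵥ* L = 0 := by
    rw [← Matrix.mulVec_transpose, hLsym.eq]
    exact hL1
  let w : Fin n ⊕ Fin n → ℝ := Sum.elim (o ᵥ* (Ψ⁻¹ * (Φ * L * Υ⁻¹))) (o ᵥ* Ψ⁻¹)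
  have hw : w ᵥ* A_c = 0 := by
    rw [hA, Matrix.vecMul_fromBlocks]
    have e1 : w ∘ Sum.inl = o ᵥ* (Ψ⁻¹ * (Φ * L * Υ⁻¹)) := rfl
    have e2 : w ∘ Sum.inr = o ᵥ* Ψ⁻¹ := rfl
    rw [e1, e2]
    simp only [Matrix.vecMul_vecMul, ← Matrix.vecMul_add]
    have b1 : Ψ⁻¹ * (Φ * L * Υ⁻¹) * -(D⁻¹ * (1 + Y * R)) +
        Ψ⁻¹ * (-(Ψ * L * Υ⁻¹) + Φ * L * Υ⁻¹ * D⁻¹ * (1 + Y * R)) = L * -Υ⁻¹ := by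
      have : Ψ⁻¹ * (Ψ * L * Υ⁻¹) = L * Υ⁻¹ := by
        rw [← mul_assoc, ← mul_assoc, hΨu, one_mul]
      rw [mul_add Ψ⁻¹, mul_neg Ψ⁻¹, this]
      noncomm_ring
    have b2 : Ψ⁻¹ * (Φ * L * Υ⁻¹) * (D⁻¹ * Y) +
        Ψ⁻¹ * -(Φ * L * Υ⁻¹ * D⁻¹ * Y) = 0 := by
      noncomm_ring
    rw [b1, b2, ← Matrix.vecMul_vecMul, hoL]
    ext i
    cases i <;> simp
  have hwy : w ⬝ᵥ y = w ⬝ᵥ z₀ := by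
    have hcont : Continuous (fun u : Fin n ⊕ Fin n → ℝ => w ⬝ᵥ u) :=
      continuous_const.dotProduct continuous_id
    have h2 := (hcont.tendsto y).comp hy
    refine tendsto_nhds_unique h2 (tendsto_const_nhds.congr fun t => ?_)
    exact (dot_exp_const A_c w z₀ hw t).symm
  have hwz : w ⬝ᵥ z₀ = o ⬝ᵥ (Ψ⁻¹ *ᵥ ((fun i => z₀ (Sum.inr i)) +
                (Φ * L * Υ⁻¹) *ᵥ (fun i => z₀ (Sum.inl i)))) := by
    have e : w ⬝ᵥ z₀ = (o ᵥ* (Ψ⁻¹ * (Φ * L * Υ⁻¹))) ⬝ᵥ (fun i => z₀ (Sum.inl i)) +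
        (o ᵥ* Ψ⁻¹) ⬝ᵥ (fun i => z₀ (Sum.inr i)) := by
      simp only [dotProduct, Fintype.sum_sum_type, w, Sum.elim_inl, Sum.elim_inr]
    rw [e, ← Matrix.dotProduct_mulVec, ← Matrix.dotProduct_mulVec, Matrix.mulVec_add,
      dotProduct_add, Matrix.mulVec_mulVec, add_comm]
  have hwv : w ⬝ᵥ v = o ⬝ᵥ (Ψ⁻¹ *ᵥ o) := by
    rw [Matrix.dotProduct_mulVec]
    simp [dotProduct, Fintype.sum_sum_type, w, v]
  have hpos : 0 < o ⬝ᵥ (Ψ⁻¹ *ᵥ o) := by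
    have hinv : Ψ⁻¹ = Matrix.diagonal (fun i => (ψv i)⁻¹) := by
      apply Matrix.inv_eq_left_inv
      rw [hΨ, Matrix.diagonal_mul_diagonal, ← Matrix.diagonal_one]
      congr 1
      ext i
      exact inv_mul_cancel₀ (hψ i).ne'
    rw [hinv]
    simp only [dotProduct, Matrix.mulVec_diagonal, o, one_mul, mul_one]
    exact Finset.sum_pos (fun i _ => inv_pos.2 (hψ i)) ⟨⟨0, by omega⟩, Finset.mem_univ _⟩
  have hcv : c = w ⬝ᵥ z₀ / (o ⬝ᵥ (Ψ⁻¹ *ᵥ o)) := by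
    rw [eq_div_iff hpos.ne', ← hwv, ← hwy, ← hc, dotProduct_smul, smul_eq_mul]
  rw [hwz] at hcv
  convert hy using 2
  rw [← hc, hcv]
  ext i
  cases i <;> simp [v, o]
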